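/- Let n ≥ 2 and let D ⊆ ℚ^n be a Manaster–Remmel set. If ≺_1,...,≺_n are linear orders on D whose intersection is the restriction to D of the product order on ℚ^n, then there exist linear orders ≺*_1,...,≺*_n on ℚ^n such that each ≺*_i restricted to D equals ≺_i and the intersection of ≺*_1,...,≺*_n is the product order on ℚ^n. -/

import Mathlib

/-- `D ⊆ ℚ^n` is a Manaster–Remmel set: dense in the product topology, and any two
distinct points of `D` differ in every coordinate. -/
def MRSet (n : ℕ) (D : Set (Fin n → ℚ)) : Prop :=
  Dense D ∧ ∀ a ∈ D, ∀ b ∈ D, a ≠ b → ∀ i : Fin n, a i ≠ b i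

/-- The product (coordinatewise) strict order on `ℚ^n`. -/
def ProdLt {n : ℕ} (a b : Fin n → ℚ) : Prop :=
  (∀ i, a i ≤ b i) ∧ a ≠ b

/-!
Fix `D` and a realizer `R`. For `p < q` in the `i`th factor, some `R j` puts every point of `D`
with `i`th coordinate at most `p` below every point with `i`th coordinate at least `q`: otherwise
each `R j` fails at some pair `(a j, b j)`, and density yields `y, x ∈ D` with
`p < y i < x i < q`, `y` above every `a j` and `x` below every `b j`; as `x ≰ y`, some `j` has
`R j y x`, whence `a j`, `y`, `x`, `b j` is an `R j`-chain. One relation cannot do this for two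
coordinates, as it would order in both directions two points that are far apart, oppositely, in
these coordinates. By counting, each `R j` is therefore tied to one coordinate, and on `D` it
compares points by that coordinate. Comparing by a coordinate, with ties broken by a linear
extension of the product order, extends it to the whole product.
-/

/-- A realizer of an ordered type: a family of strict linear orders whose intersection is `<`. -/
structure IsRealizer {P κ : Type*} [LT P] (R : κ → P → P → Prop) : Prop where
  isStrictTotalOrder : ∀ j, IsStrictTotalOrder P (R j)
  lt_iff : ∀ a b, a < b ↔ ∀ j, R j a b

namespace IsRealizer

variable {P κ : Type*}

theorem exists_rel_of_not_le [PartialOrder P] {R : κ → P → P → Prop} (hR : IsRealizer R)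
    {a b : P} (hab : ¬b ≤ a) : ∃ j, R j a b := by
  by_contra! hnot
  have hba : ∀ j, R j b a := fun j => by
    have := hR.isStrictTotalOrder j
    by_contra hj
    exact hab (Std.Trichotomous.trichotomous b a hj (hnot j)).le
  exact hab ((hR.lt_iff b a).2 hba).le

theorem nonempty_index [Preorder P] [Nonempty P] {R : κ → P → P → Prop} (hR : IsRealizer R) :
    Nonempty κ := by
  obtain ⟨a⟩ := ‹Nonempty P›
  by_contra hκ
  exact lt_irrefl a ((hR.lt_iff a a).2 fun j => (hκ ⟨j⟩).elim)

theorem reindex [LT P] {κ' : Type*} {R : κ → P → P → Prop} (hR : IsRealizer R) (e : κ' ≃ κ) :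
    IsRealizer fun j => R (e j) where
  isStrictTotalOrder j := hR.isStrictTotalOrder (e j)
  lt_iff a b := (hR.lt_iff a b).trans (e.forall_congr_right (q := fun j => R j a b)).symm

end IsRealizer

theorem exists_perm_of_exists_of_unique {ι : Type*} [Finite ι] {r : ι → ι → Prop}
    (hex : ∀ i, ∃ j, r i j) (huniq : ∀ i k j, r i j → r k j → i = k) :
    ∃ τ : Equiv.Perm ι, ∀ i j, r i j ↔ τ i = j := by
  choose f hf using hex
  have hinj : f.Injective := fun i k h => huniq i k (f i) (hf i) (h ▸ hf k)
  have hbij : f.Bijective := Finite.injective_iff_bijective.1 hinj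
  refine ⟨Equiv.ofBijective f hbij, fun i j => ⟨fun hij => ?_, ?_⟩⟩
  · obtain ⟨k, rfl⟩ := hbij.surjective j
    exact congrArg f (huniq i k (f k) hij (hf k))
  · rintro rfl
    exact hf i

theorem lt_of_apply_lt_of_forall_ne_apply_le {ι : Type*} {α : ι → Type*} [∀ i, Preorder (α i)]
    {a b : ∀ i, α i} {i : ι} (hi : a i < b i) (hne : ∀ l ≠ i, a l ≤ b l) : a < b :=
  Pi.lt_def.2 ⟨fun l => by obtain rfl | hl := eq_or_ne l i; exacts [hi.le, hne l hl], i, hi⟩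

theorem exists_apply_mem_and_forall_ne_apply_mem_of_dense {ι : Type*} [Finite ι] {α : ι → Type*}
    [∀ i, TopologicalSpace (α i)] {D : Set (∀ i, α i)} (hD : Dense D) (i : ι)
    {U : Set (α i)} (hU : IsOpen U) (hU' : U.Nonempty)
    {V : ∀ l, Set (α l)} (hV : ∀ l, IsOpen (V l)) (hV' : ∀ l, (V l).Nonempty) :
    ∃ d : D, d.1 i ∈ U ∧ ∀ l ≠ i, d.1 l ∈ V l := by
  classical
  have hopen : ∀ l, IsOpen (Function.update V i U l) :=
    (Function.forall_update_iff V fun l s => IsOpen s).2 ⟨hU, fun l _ => hV l⟩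
  have hne : ∀ l, (Function.update V i U l).Nonempty :=
    (Function.forall_update_iff V fun l s => s.Nonempty).2 ⟨hU', fun l _ => hV' l⟩
  obtain ⟨d, hdD, hd⟩ := hD.exists_mem_open (isOpen_set_pi Set.finite_univ fun l _ => hopen l)
    (Set.univ_pi_nonempty_iff.2 hne)
  exact ⟨⟨d, hdD⟩, (Function.forall_update_iff V fun l s => d l ∈ s).1 fun l => hd l trivial⟩

section CoordLT

variable {ι : Type*} {α : ι → Type*} [∀ i, LinearOrder (α i)]

/-- Comparison of points of a product by their `i`th coordinate, made into a linear order by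
breaking ties with a fixed linear extension of the product order. -/
def CoordLT (i : ι) (a b : ∀ i, α i) : Prop :=
  toLex (a i, toLinearExtension a) < toLex (b i, toLinearExtension b)

theorem coordLT_iff {i : ι} {a b : ∀ i, α i} :
    CoordLT i a b ↔ a i ≤ b i ∧ (a i = b i → toLinearExtension a < toLinearExtension b) :=
  Prod.Lex.toLex_lt_toLex'

theorem toLinearExtension_injective {P : Type*} [PartialOrder P] :
    Function.Injective (toLinearExtension : P → LinearExtension P) :=
  Function.injective_id

instance isStrictTotalOrder_coordLT (i : ι) : IsStrictTotalOrder (∀ i, α i) (CoordLT i) :=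
  (RelEmbedding.preimage
    ⟨fun a : ∀ i, α i => toLex (a i, toLinearExtension a),
      fun _ _ h => toLinearExtension_injective (Prod.ext_iff.1 (toLex.injective h)).2⟩
    (· < ·)).isStrictTotalOrder

theorem isRealizer_coordLT [Nonempty ι] :
    IsRealizer (CoordLT : ι → (∀ i, α i) → (∀ i, α i) → Prop) where
  isStrictTotalOrder := isStrictTotalOrder_coordLT
  lt_iff a b := by
    constructor
    · intro hab i
      have hext : toLinearExtension a < toLinearExtension b :=
        toLinearExtension.monotone.strictMono_of_injective toLinearExtension_injective hab
      exact coordLT_iff.2 ⟨hab.le i, fun _ => hext⟩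
    · intro h
      refine lt_of_le_of_ne (fun i => (coordLT_iff.1 (h i)).1) ?_
      rintro rfl
      exact irrefl (r := CoordLT (Classical.arbitrary ι)) a (h _)

theorem coordLT_iff_lt_of_injOn {D : Set (∀ i, α i)} {i : ι} (hinj : D.InjOn fun a => a i)
    {a b : ∀ i, α i} (ha : a ∈ D) (hb : b ∈ D) : CoordLT i a b ↔ a i < b i := by
  refine ⟨fun h => (coordLT_iff.1 h).1.lt_of_ne fun heq => ?_,
    fun h => coordLT_iff.2 ⟨h.le, fun heq => absurd heq h.ne⟩⟩
  obtain rfl := hinj ha hb heq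
  exact irrefl (r := CoordLT i) a h

end CoordLT

section OrdersAcross

variable {ι : Type*} {α : ι → Type*} [∀ i, LinearOrder (α i)] {D : Set (∀ i, α i)}

/-- `r` respects the gap from `p` to `q` in the `i`th coordinate: it puts each point of `D` whose
`i`th coordinate is at most `p` below each point whose `i`th coordinate is at least `q`. -/
def OrdersAcross (r : D → D → Prop) (i : ι) (p q : α i) : Prop :=
  ∀ a b : D, a.1 i ≤ p → q ≤ b.1 i → r a b

variable [Finite ι] [∀ i, TopologicalSpace (α i)] [∀ i, OrderClosedTopology (α i)]
  [∀ i, NoMinOrder (α i)] [∀ i, NoMaxOrder (α i)] [∀ i, Nonempty (α i)]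

theorem OrdersAcross.coord_unique (hD : Dense D) {r : D → D → Prop} [Std.Asymm r] {i k : ι}
    {p q : α i} {p' q' : α k} (hi : OrdersAcross r i p q) (hk : OrdersAcross r k p' q') :
    i = k := by
  classical
  by_contra hik
  obtain ⟨c⟩ : Nonempty (∀ l, α l) := inferInstance
  obtain ⟨u, hui, hu⟩ := exists_apply_mem_and_forall_ne_apply_mem_of_dense hD i
    isOpen_Iio (Set.nonempty_Iio (a := p))
    (fun l => isOpen_Ioi (a := Function.update c k q' l)) fun _ => Set.nonempty_Ioi
  obtain ⟨v, hvi, hv⟩ := exists_apply_mem_and_forall_ne_apply_mem_of_dense hD i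
    isOpen_Ioi (Set.nonempty_Ioi (a := q))
    (fun l => isOpen_Iio (a := Function.update c k p' l)) fun _ => Set.nonempty_Iio
  have huk : q' < u.1 k := by simpa using hu k (Ne.symm hik)
  have hvk : v.1 k < p' := by simpa using hv k (Ne.symm hik)
  exact asymm (hi u v hui.le hvi.le) (hk v u hvk.le huk.le)

variable [∀ i, DenselyOrdered (α i)]

theorem IsRealizer.exists_ordersAcross (hD : Dense D) {κ : Type*} [Finite κ]
    {R : κ → D → D → Prop} (hR : IsRealizer R) (i : ι) {p q : α i} (hpq : p < q) :
    ∃ j, OrdersAcross (R j) i p q := by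
  by_contra! hbad
  simp only [OrdersAcross, not_forall] at hbad
  choose a b hap hqb hab using hbad
  obtain ⟨m, hpm, hmq⟩ := exists_between hpq
  obtain ⟨A, hA⟩ := Finite.exists_le fun j => (a j).1
  obtain ⟨B, hB⟩ := Finite.exists_ge fun j => (b j).1
  obtain ⟨y, hyi, hy⟩ := exists_apply_mem_and_forall_ne_apply_mem_of_dense hD i
    isOpen_Ioo (Set.nonempty_Ioo.2 hpm) (fun l => isOpen_Ioi (a := A l)) fun _ => Set.nonempty_Ioi
  obtain ⟨x, hxi, hx⟩ := exists_apply_mem_and_forall_ne_apply_mem_of_dense hD i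
    isOpen_Ioo (Set.nonempty_Ioo.2 hmq) (fun l => isOpen_Iio (a := B l)) fun _ => Set.nonempty_Iio
  have hay : ∀ j, a j < y := fun j =>
    lt_of_apply_lt_of_forall_ne_apply_le ((hap j).trans_lt hyi.1)
      fun l hl => (hA j l).trans (hy l hl).le
  have hxb : ∀ j, x < b j := fun j =>
    lt_of_apply_lt_of_forall_ne_apply_le (hxi.2.trans_le (hqb j))
      fun l hl => (hx l hl).le.trans (hB j l)
  obtain ⟨j, hj⟩ : ∃ j, R j y x :=
    hR.exists_rel_of_not_le fun hxy => ((hxy i).trans_lt hyi.2).not_gt hxi.1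
  have := hR.isStrictTotalOrder j
  exact hab j (_root_.trans (_root_.trans ((hR.lt_iff _ _).1 (hay j) j) hj)
    ((hR.lt_iff _ _).1 (hxb j) j))

theorem IsRealizer.exists_perm_forall_rel_of_apply_lt (hD : Dense D) {R : ι → D → D → Prop}
    (hR : IsRealizer R) :
    ∃ τ : Equiv.Perm ι, ∀ i (a b : D), a.1 i < b.1 i → R (τ i) a b := by
  have hex : ∀ i, ∃ j, ∃ p q : α i, OrdersAcross (R j) i p q := fun i => by
    obtain ⟨p, q, hpq⟩ := exists_pair_lt (α i)
    obtain ⟨j, hj⟩ := hR.exists_ordersAcross hD i hpq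
    exact ⟨j, p, q, hj⟩
  have huniq : ∀ i k j, (∃ p q : α i, OrdersAcross (R j) i p q) →
      (∃ p q : α k, OrdersAcross (R j) k p q) → i = k := by
    rintro i k j ⟨p, q, hi⟩ ⟨p', q', hk⟩
    have := hR.isStrictTotalOrder j
    exact hi.coord_unique hD hk
  obtain ⟨τ, hτ⟩ := exists_perm_of_exists_of_unique hex huniq
  refine ⟨τ, fun i a b hab => ?_⟩
  obtain ⟨j, hj⟩ := hR.exists_ordersAcross hD i hab
  rw [(hτ i j).1 ⟨_, _, hj⟩]
  exact hj a b le_rfl le_rfl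

theorem IsRealizer.exists_perm_forall_rel_iff_apply_lt (hD : Dense D)
    (hinj : ∀ i, D.InjOn fun a => a i) {R : ι → D → D → Prop} (hR : IsRealizer R) :
    ∃ τ : Equiv.Perm ι, ∀ i (a b : D), R (τ i) a b ↔ a.1 i < b.1 i := by
  obtain ⟨τ, hτ⟩ := hR.exists_perm_forall_rel_of_apply_lt hD
  refine ⟨τ, fun i a b => ⟨fun hab => ?_, hτ i a b⟩⟩
  have := hR.isStrictTotalOrder (τ i)
  rcases lt_trichotomy (a.1 i) (b.1 i) with hlt | heq | hgt
  · exact hlt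
  · obtain rfl := Subtype.ext (hinj i a.2 b.2 heq)
    exact (irrefl a hab).elim
  · exact (asymm hab (hτ i b a hgt)).elim

end OrdersAcross

theorem stmt_16_general {ι : Type*} [Finite ι] {α : ι → Type*} [∀ i, LinearOrder (α i)]
    [∀ i, DenselyOrdered (α i)] [∀ i, NoMinOrder (α i)] [∀ i, NoMaxOrder (α i)]
    [∀ i, Nonempty (α i)] [∀ i, TopologicalSpace (α i)] [∀ i, OrderClosedTopology (α i)]
    {D : Set (∀ i, α i)} (hD : Dense D) (hinj : ∀ i, D.InjOn fun a => a i)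
    {R : ι → D → D → Prop} (hR : IsRealizer R) :
    ∃ S : ι → (∀ i, α i) → (∀ i, α i) → Prop,
      IsRealizer S ∧ ∀ j (a b : D), S j a b ↔ R j a b := by
  obtain ⟨τ, hτ⟩ := hR.exists_perm_forall_rel_iff_apply_lt hD hinj
  have : Nonempty D := hD.nonempty.to_subtype
  have : Nonempty ι := hR.nonempty_index
  refine ⟨fun j => CoordLT (τ.symm j), isRealizer_coordLT.reindex τ.symm, fun j a b => ?_⟩
  have hcoord := coordLT_iff_lt_of_injOn (hinj (τ.symm j)) a.2 b.2
  rwa [← hτ, τ.apply_symm_apply] at hcoord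

theorem prodLt_iff_lt {n : ℕ} {a b : Fin n → ℚ} : ProdLt a b ↔ a < b :=
  (lt_iff_le_and_ne (a := a) (b := b)).symm

theorem MRSet.injOn_apply {n : ℕ} {D : Set (Fin n → ℚ)} (hD : MRSet n D) (i : Fin n) :
    D.InjOn fun a => a i :=
  fun a ha b hb => not_imp_not.1 fun hab => hD.2 a ha b hb hab i

/-- any realizers `≺_1, …, ≺_n` of the product order on a Manaster–Remmel set
`D` extend to realizers `≺*_1, …, ≺*_n` of the product order on all of `ℚ^n`. -/
theorem stmt_16 (n : ℕ) (hn : 2 ≤ n) (D : Set (Fin n → ℚ)) (hD : MRSet n D)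
    (R : Fin n → ↥D → ↥D → Prop)
    (hR : ∀ i, IsStrictTotalOrder ↥D (R i))
    (hreal : ∀ a b : ↥D, ProdLt (a : Fin n → ℚ) (b : Fin n → ℚ) ↔ ∀ j, R j a b) :
    ∃ S : Fin n → (Fin n → ℚ) → (Fin n → ℚ) → Prop,
      (∀ i, IsStrictTotalOrder (Fin n → ℚ) (S i)) ∧
      (∀ i : Fin n, ∀ a b : ↥D, S i (a : Fin n → ℚ) (b : Fin n → ℚ) ↔ R i a b) ∧
      (∀ a b : Fin n → ℚ, ProdLt a b ↔ ∀ j, S j a b) := by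
  obtain ⟨S, hS, hSR⟩ := stmt_16_general hD.1 hD.injOn_apply
    ⟨hR, fun a b => prodLt_iff_lt.symm.trans (hreal a b)⟩
  exact ⟨S, hS.isStrictTotalOrder, hSR, fun a b => prodLt_iff_lt.trans (hS.lt_iff a b)⟩
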